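/- arXiv:2109.03302 — 4 statements merged into one kernel-verified Lean document; each statement's English description precedes it below -/
import Mathlib

section
/- Fix integers n ≥ 1 and g ≥ 1. For each permutation σ ∈ Perm(Fin n) and each monotone (nondecreasing) function χ : Fin n → Fin g, define the set C(σ,χ) := {x : Fin n → ℝ | (∀ a b : Fin n, a < b → x (σ a) < x (σ b)) ∧ (∀ a : Fin n, (χ a : ℝ) < x (σ a) ∧ x (σ a) < (χ a : ℝ) + 1)}. Then: (i) each C(σ,χ) is a nonempty, open, convex subset of the space Fin n → ℝ; (ii) the sets C(σ,χ) for distinct pairs (σ,χ) are pairwise disjoint; and (iii) their union over all σ ∈ Perm(Fin n) and all monotone χ : Fin n → Fin g equals the set of all injective x : Fin n → ℝ such that every value x i lies in the union of open intervals ⋃_{j ∈ Fin g} ((j : ℝ), (j : ℝ)+1). -/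
/-!
A point of a cell is a tuple `x` for which `x ∘ σ` is strictly increasing and `χ a` is the
integer part of `x (σ a)`. Sorting a tuple with distinct entries determines `σ`
(`cell_perm_unique`), and a real number lies in at most one interval `(j, j + 1)`, which
determines `χ` (`interval_index_le`); this gives disjointness. Conversely, an injective
tuple with values in these intervals is sorted by some `σ`, and the interval index is automatically
nondecreasing along the sorted tuple; this gives the union. Each cell is cut out by finitely
many strict linear inequalities, hence open and convex, and it contains the point
`x (σ a) = χ a + (a + 1) / (n + 1)`.
-/

/-- The open cell of the configuration space of n points on the disjoint union of g open
unit intervals (j, j+1), j = 0, …, g−1, indexed by a permutation σ (the ordering of the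
points) and a nondecreasing function χ (recording which interval each point lies in). -/
def cell (n g : ℕ) (σ : Equiv.Perm (Fin n)) (χ : Fin n → Fin g) : Set (Fin n → ℝ) :=
  {x | (∀ a b : Fin n, a < b → x (σ a) < x (σ b)) ∧
    (∀ a : Fin n, ((χ a : ℕ) : ℝ) < x (σ a) ∧ x (σ a) < ((χ a : ℕ) : ℝ) + 1)}

/-- The index of the unit interval containing a real number is monotone in that number; the case
`y = z`, applied in both directions, shows that the index is unique. -/
theorem interval_index_le {i j : ℕ} {y z : ℝ} (hi : (i : ℝ) < y) (hj : z < (j : ℝ) + 1)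
    (hyz : y ≤ z) : i ≤ j := by
  have h : (i : ℝ) < ((j + 1 : ℕ) : ℝ) := by push_cast; linarith
  have := Nat.cast_lt.mp h
  omega

theorem cell_nonempty (n g : ℕ) (σ : Equiv.Perm (Fin n)) (χ : Fin n → Fin g)
    (hχ : Monotone χ) : (cell n g σ χ).Nonempty := by
  have hpos : (0 : ℝ) < (n : ℝ) + 1 := by positivity
  refine ⟨fun i => ((χ (σ.symm i) : ℕ) : ℝ) + (((σ.symm i : ℕ) : ℝ) + 1) / ((n : ℝ) + 1), ?_, ?_⟩
  · intro a b hab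
    simp only [Equiv.symm_apply_apply]
    have h1 : ((χ a : ℕ) : ℝ) ≤ ((χ b : ℕ) : ℝ) := by exact_mod_cast hχ hab.le
    have h2 : ((a : ℕ) : ℝ) < ((b : ℕ) : ℝ) := by exact_mod_cast hab
    have h3 : (((a : ℕ) : ℝ) + 1) / ((n : ℝ) + 1) < (((b : ℕ) : ℝ) + 1) / ((n : ℝ) + 1) := by
      gcongr
    linarith
  · intro a
    simp only [Equiv.symm_apply_apply]
    have h2 : ((a : ℕ) : ℝ) < (n : ℝ) := by exact_mod_cast a.isLt
    have h3 : 0 < (((a : ℕ) : ℝ) + 1) / ((n : ℝ) + 1) := by positivity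
    have h4 : (((a : ℕ) : ℝ) + 1) / ((n : ℝ) + 1) < 1 := by
      rw [div_lt_one hpos]; linarith
    constructor <;> linarith

theorem cell_isOpen (n g : ℕ) (σ : Equiv.Perm (Fin n)) (χ : Fin n → Fin g) :
    IsOpen (cell n g σ χ) := by
  simp only [cell, Set.ofPred_and, Set.ofPred_forall]
  refine IsOpen.inter ?_ ?_
  · exact isOpen_iInter_of_finite fun a => isOpen_iInter_of_finite fun b =>
      isOpen_iInter_of_finite fun _ => isOpen_lt (by fun_prop) (by fun_prop)
  · exact isOpen_iInter_of_finite fun a =>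
      (isOpen_lt (by fun_prop) (by fun_prop)).inter (isOpen_lt (by fun_prop) (by fun_prop))

theorem cell_convex (n g : ℕ) (σ : Equiv.Perm (Fin n)) (χ : Fin n → Fin g) :
    Convex ℝ (cell n g σ χ) := by
  rw [convex_iff_forall_pos]
  rintro x ⟨hx, hx'⟩ y ⟨hy, hy'⟩ s t hs ht hst
  refine ⟨fun a b hab => ?_, fun a => ?_⟩
  · simp only [Pi.add_apply, Pi.smul_apply, smul_eq_mul]
    have h1 := mul_lt_mul_of_pos_left (hx a b hab) hs
    have h2 := mul_lt_mul_of_pos_left (hy a b hab) ht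
    linarith
  · have h := convex_Ioo ((χ a : ℕ) : ℝ) (((χ a : ℕ) : ℝ) + 1) (hx' a) (hy' a) hs.le ht.le hst
    simpa using h

/-- A point of a cell has distinct coordinates, since it is strictly increasing after
reindexing by `σ`. -/
theorem cell_injective {n g : ℕ} {σ : Equiv.Perm (Fin n)} {χ : Fin n → Fin g}
    {x : Fin n → ℝ} (hx : x ∈ cell n g σ χ) : Function.Injective x := by
  have h : StrictMono (x ∘ σ) := fun a b hab => hx.1 a b hab
  exact (Equiv.injective_comp σ x).mp h.injective

/-- All sortings of a tuple agree as tuples, so when the coordinates are distinct the sorting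
permutation itself is determined. -/
theorem cell_perm_unique {n g : ℕ} {σ σ' : Equiv.Perm (Fin n)} {χ χ' : Fin n → Fin g}
    {x : Fin n → ℝ} (hx : x ∈ cell n g σ χ) (hx' : x ∈ cell n g σ' χ') : σ = σ' := by
  have h : StrictMono (x ∘ σ) := fun a b hab => hx.1 a b hab
  have h' : StrictMono (x ∘ σ') := fun a b hab => hx'.1 a b hab
  have heq := Tuple.unique_monotone h.monotone h'.monotone
  exact Equiv.ext fun a => cell_injective hx (congrFun heq a)

/-- the cells C(σ,χ) for σ a permutation and χ monotone are nonempty open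
convex sets, pairwise disjoint, and their union is the set of injective tuples all of whose
values lie in the union of the open intervals (j, j+1), j = 0, …, g−1. -/
theorem cells_decompose_configuration_space
    (n g : ℕ) (hn : 1 ≤ n) (hg : 1 ≤ g) :
    (∀ (σ : Equiv.Perm (Fin n)) (χ : Fin n → Fin g), Monotone χ →
      (cell n g σ χ).Nonempty ∧ IsOpen (cell n g σ χ) ∧ Convex ℝ (cell n g σ χ)) ∧
    (∀ (σ σ' : Equiv.Perm (Fin n)) (χ χ' : Fin n → Fin g), Monotone χ → Monotone χ' →
      (σ, χ) ≠ (σ', χ') → Disjoint (cell n g σ χ) (cell n g σ' χ')) ∧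
    ((⋃ (σ : Equiv.Perm (Fin n)) (χ : Fin n → Fin g) (_ : Monotone χ), cell n g σ χ)
      = {x : Fin n → ℝ | Function.Injective x ∧
          ∀ i, x i ∈ ⋃ j : Fin g, Set.Ioo ((j : ℕ) : ℝ) (((j : ℕ) : ℝ) + 1)}) := by
  refine ⟨fun σ χ hχ => ⟨cell_nonempty n g σ χ hχ, cell_isOpen n g σ χ, cell_convex n g σ χ⟩,
    ?_, ?_⟩
  · intro σ σ' χ χ' _ _ hne
    rw [Set.disjoint_left]
    intro x hx hx'
    apply hne
    obtain rfl := cell_perm_unique hx hx'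
    refine Prod.ext rfl (funext fun a => Fin.ext (le_antisymm ?_ ?_))
    · exact interval_index_le (hx.2 a).1 (hx'.2 a).2 le_rfl
    · exact interval_index_le (hx'.2 a).1 (hx.2 a).2 le_rfl
  · ext x
    simp only [Set.mem_iUnion, Set.mem_ofPred_eq, Set.mem_Ioo]
    constructor
    · rintro ⟨σ, χ, -, hx⟩
      refine ⟨cell_injective hx, fun i => ⟨χ (σ.symm i), ?_⟩⟩
      simpa using hx.2 (σ.symm i)
    · rintro ⟨hinj, hmem⟩
      choose c hc using hmem
      have hmono : Monotone (x ∘ Tuple.sort x) := Tuple.monotone_sort x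
      have hstrict : StrictMono (x ∘ Tuple.sort x) :=
        hmono.strictMono_of_injective (hinj.comp (Tuple.sort x).injective)
      refine ⟨Tuple.sort x, c ∘ Tuple.sort x, fun a b hab => ?_,
        fun a b hab => hstrict hab, fun a => hc _⟩
      exact interval_index_le (hc _).1 (hc _).2 (hmono hab)
end

section
/- Let X and Y be locally compact Hausdorff topological spaces, and let W := {(a, b) ∈ OnePoint X × OnePoint Y | a = ∞ ∨ b = ∞} (the 'wedge' locus). Then the quotient of OnePoint X × OnePoint Y obtained by collapsing W to a single point is homeomorphic to OnePoint(X × Y), via a homeomorphism sending the class of (x, y), for x ∈ X and y ∈ Y, to the point (x, y), and the class of W to ∞. -/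
/-!
The smash map `OnePoint X × OnePoint Y → OnePoint (X × Y)`, which is the identity on `X × Y` and
sends the wedge locus to `∞`, is continuous (`continuous_smashMap`): the preimage of an open set
avoiding `∞` is an open subset of `X × Y`, and the preimage of an open neighbourhood of `∞` is the
complement of a compact subset of `X × Y`, which is closed because `OnePoint X × OnePoint Y` is
Hausdorff. Its fibres are exactly the classes of the collapse, so it descends to a continuous
bijection from the quotient, a compact space, to the Hausdorff space `OnePoint (X × Y)`; such a
bijection is a homeomorphism.
-/

/-- The setoid collapsing a subset `W` of `P` to a single point. -/
def collapseSetoid {P : Type*} (W : Set P) : Setoid P where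
  r x y := x = y ∨ (x ∈ W ∧ y ∈ W)
  iseqv := by
    refine ⟨fun x => Or.inl rfl, ?_, ?_⟩
    · rintro x y (rfl | ⟨h1, h2⟩)
      · exact Or.inl rfl
      · exact Or.inr ⟨h2, h1⟩
    · rintro x y z (rfl | ⟨h1, h2⟩) (rfl | ⟨h3, h4⟩)
      · exact Or.inl rfl
      · exact Or.inr ⟨h3, h4⟩
      · exact Or.inr ⟨h1, h2⟩
      · exact Or.inr ⟨h1, h4⟩

/-- The map `OnePoint X × OnePoint Y → OnePoint (X × Y)` that is the identity on `X × Y` and sends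
every pair with a coordinate `∞` to `∞`. -/
def smashMap {X Y : Type*} (p : OnePoint X × OnePoint Y) : OnePoint (X × Y) :=
  p.1.elim OnePoint.infty fun x => p.2.elim OnePoint.infty fun y => ((x, y) : X × Y)

theorem smashMap_of_mem_wedge {X Y : Type*} {p : OnePoint X × OnePoint Y}
    (hp : p.1 = OnePoint.infty ∨ p.2 = OnePoint.infty) : smashMap p = OnePoint.infty := by
  obtain ⟨a, b⟩ := p
  induction a using OnePoint.rec <;> induction b using OnePoint.rec <;> simp_all [smashMap]

theorem smashMap_preimage_of_infty_notMem {X Y : Type*} {U : Set (OnePoint (X × Y))}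
    (hU : OnePoint.infty ∉ U) :
    smashMap ⁻¹' U = Prod.map ((↑) : X → OnePoint X) ((↑) : Y → OnePoint Y) ''
      (((↑) : X × Y → OnePoint (X × Y)) ⁻¹' U) := by
  ext ⟨a, b⟩
  induction a using OnePoint.rec <;> induction b using OnePoint.rec <;> simp_all [smashMap]

theorem continuous_smashMap {X Y : Type*} [TopologicalSpace X] [LocallyCompactSpace X] [T2Space X]
    [TopologicalSpace Y] [LocallyCompactSpace Y] [T2Space Y] :
    Continuous (smashMap : OnePoint X × OnePoint Y → OnePoint (X × Y)) := by
  refine continuous_def.2 fun U hU => ?_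
  by_cases h : OnePoint.infty ∈ U
  · have hK := ((OnePoint.isOpen_iff_of_mem' h).1 hU).1
    rw [← isClosed_compl_iff, ← Set.preimage_compl,
      smashMap_preimage_of_infty_notMem (by simpa using h)]
    exact (hK.image
      (OnePoint.continuous_coe.prodMap OnePoint.continuous_coe)).isClosed
  · rw [smashMap_preimage_of_infty_notMem h]
    exact OnePoint.isOpenMap_coe.prodMap OnePoint.isOpenMap_coe _
      ((OnePoint.isOpen_iff_of_notMem h).1 hU)

/-- The fibres of `smashMap` are the classes of the collapse of the wedge locus. -/
theorem smashMap_eq_iff {X Y : Type*} (p q : OnePoint X × OnePoint Y) :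
    smashMap p = smashMap q ↔ collapseSetoid
      {p : OnePoint X × OnePoint Y | p.1 = OnePoint.infty ∨ p.2 = OnePoint.infty} p q := by
  change _ ↔ p = q ∨ (_ ∧ _)
  obtain ⟨a, b⟩ := p
  obtain ⟨c, d⟩ := q
  induction a using OnePoint.rec <;> induction b using OnePoint.rec <;>
    induction c using OnePoint.rec <;> induction d using OnePoint.rec <;> simp [smashMap]

theorem smashMap_surjective {X Y : Type*} :
    Function.Surjective (smashMap : OnePoint X × OnePoint Y → OnePoint (X × Y)) := by
  intro z
  induction z using OnePoint.rec with
  | infty => exact ⟨(OnePoint.infty, OnePoint.infty), rfl⟩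
  | coe z => exact ⟨((z.1 : OnePoint X), (z.2 : OnePoint Y)), rfl⟩

/-- the smash-product identification: collapsing the wedge locus
{(a,b) | a = ∞ or b = ∞} in OnePoint X × OnePoint Y yields OnePoint (X × Y). -/
theorem collapse_wedge_onePoint_prod_homeo
    (X Y : Type*) [TopologicalSpace X] [LocallyCompactSpace X] [T2Space X]
    [TopologicalSpace Y] [LocallyCompactSpace Y] [T2Space Y] :
    ∃ h : Quotient (collapseSetoid
            {p : OnePoint X × OnePoint Y | p.1 = OnePoint.infty ∨ p.2 = OnePoint.infty})
          ≃ₜ OnePoint (X × Y),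
      (∀ (x : X) (y : Y),
          h (Quotient.mk (collapseSetoid
              {p : OnePoint X × OnePoint Y | p.1 = OnePoint.infty ∨ p.2 = OnePoint.infty})
              ((x : OnePoint X), (y : OnePoint Y)))
            = (((x, y) : X × Y) : OnePoint (X × Y))) ∧
      (∀ p : OnePoint X × OnePoint Y, p.1 = OnePoint.infty ∨ p.2 = OnePoint.infty →
          h (Quotient.mk (collapseSetoid
              {p : OnePoint X × OnePoint Y | p.1 = OnePoint.infty ∨ p.2 = OnePoint.infty})
              p)
            = OnePoint.infty) := by
  let f : Quotient (collapseSetoid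
      {p : OnePoint X × OnePoint Y | p.1 = OnePoint.infty ∨ p.2 = OnePoint.infty}) →
      OnePoint (X × Y) := Quotient.lift smashMap fun p q hpq => (smashMap_eq_iff p q).2 hpq
  have hf : Continuous f := continuous_smashMap.quotient_lift _
  have hbij : Function.Bijective f := by
    refine ⟨?_, fun z => ?_⟩
    · rintro ⟨p⟩ ⟨q⟩ hpq
      exact Quotient.sound ((smashMap_eq_iff p q).1 hpq)
    · obtain ⟨p, hp⟩ := smashMap_surjective z
      exact ⟨Quotient.mk _ p, hp⟩
  exact ⟨Continuous.homeoOfEquivCompactToT2 (f := Equiv.ofBijective f hbij) hf,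
    fun x y => rfl, fun p hp => smashMap_of_mem_wedge hp⟩
end

section
/- Let G be a finite group acting continuously by homeomorphisms on a locally compact Hausdorff topological space A, and extend the action of G to OnePoint A by letting every group element fix the added point ∞. Then the one-point compactification of the orbit space, OnePoint(A / G), is homeomorphic to the orbit space of the extended action, (OnePoint A) / G, via a homeomorphism sending the orbit class of each a ∈ A (viewed in OnePoint(A / G)) to the orbit class of a in (OnePoint A) / G, and sending ∞ to the orbit class of ∞. -/
/-!
The homeomorphism is the inverse of the map `(OnePoint A) / G → OnePoint (A / G)` induced by
`OnePoint.map π`, where `π : A → A / G` is the orbit projection. This induced map is a bijection,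
because the orbits in `OnePoint A` are those of `A` together with `{∞}`. Since `G` is finite, `π` is
proper (`isProperMap_orbitMk`): it is closed and its fibres, being orbits, are finite. Hence
`OnePoint.map π` is continuous at `∞`. A continuous bijection from a compact space to a Hausdorff
space is a homeomorphism, and `OnePoint (A / G)` is Hausdorff because `A / G` is Hausdorff and
locally compact.
-/

/-- The action of `G` on the one-point compactification, fixing the added point ∞. -/
instance onePointSMul (G A : Type*) [SMul G A] : SMul G (OnePoint A) :=
  ⟨fun g p => Option.elim p OnePoint.infty (fun a => ((g • a : A) : OnePoint A))⟩

instance onePointMulAction (G A : Type*) [Monoid G] [MulAction G A] :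
    MulAction G (OnePoint A) where
  one_smul p := by
    cases p with
    | infty => rfl
    | coe a => exact congrArg _ (one_smul G a)
  mul_smul g h p := by
    cases p with
    | infty => rfl
    | coe a => exact congrArg _ (mul_smul g h a)

/-- The orbit projection of a finite group action is closed with finite fibres, hence proper. -/
theorem isProperMap_orbitMk (G : Type*) [Group G] [Finite G]
    (A : Type*) [TopologicalSpace A] [MulAction G A] [ContinuousConstSMul G A] :
    IsProperMap (Quotient.mk (MulAction.orbitRel G A)) := by
  refine isProperMap_iff_isClosedMap_and_compact_fibers.mpr
    ⟨continuous_quotient_mk', fun C hC => ?_, fun y => ?_⟩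
  · -- The saturation of `C` is the finite union of its translates.
    rw [← isQuotientMap_quotient_mk'.isClosed_preimage]
    have h : Quotient.mk (MulAction.orbitRel G A) ⁻¹' (Quotient.mk (MulAction.orbitRel G A) '' C) =
        ⋃ g : G, (fun a : A => g • a) ⁻¹' C := by
      ext a
      simp only [Set.mem_preimage, Set.mem_image, Set.mem_iUnion]
      constructor
      · rintro ⟨c, hc, hca⟩
        obtain ⟨g, rfl⟩ := MulAction.orbitRel_apply.mp (Quotient.exact hca)
        exact ⟨g, hc⟩
      · rintro ⟨g, hg⟩
        exact ⟨g • a, hg, Quotient.sound (MulAction.orbitRel_apply.mpr ⟨g, rfl⟩)⟩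
    exact h ▸ isClosed_iUnion_of_finite fun g => hC.preimage (continuous_const_smul g)
  · induction y using Quotient.inductionOn with | _ a
    refine ((Set.finite_range fun g : G => g • a).subset fun b hb => ?_).isCompact
    exact MulAction.orbitRel_apply.mp (Quotient.exact hb)

/-- The map `(OnePoint A) / G → OnePoint (A / G)` induced by the orbit projection `A → A / G`. -/
def onePointOrbitMap (G A : Type*) [Group G] [MulAction G A] :
    Quotient (MulAction.orbitRel G (OnePoint A)) → OnePoint (Quotient (MulAction.orbitRel G A)) :=
  Quotient.lift (OnePoint.map (Quotient.mk (MulAction.orbitRel G A))) <| by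
    intro p q hpq
    obtain ⟨g, rfl⟩ := MulAction.orbitRel_apply.mp hpq
    cases q with
    | infty => rfl
    | coe a =>
      exact congrArg OnePoint.some (Quotient.sound (MulAction.orbitRel_apply.mpr ⟨g, rfl⟩))

theorem onePointOrbitMap_bijective (G A : Type*) [Group G] [MulAction G A] :
    Function.Bijective (onePointOrbitMap G A) := by
  constructor
  · intro x y
    induction x using Quotient.inductionOn with | _ p
    induction y using Quotient.inductionOn with | _ q
    intro h
    change OnePoint.map _ p = OnePoint.map _ q at h
    cases p with
    | infty =>
      cases q with
      | infty => rfl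
      | coe b => exact absurd h (OnePoint.infty_ne_coe _)
    | coe a =>
      cases q with
      | infty => exact absurd h (OnePoint.coe_ne_infty _)
      | coe b =>
        obtain ⟨g, rfl⟩ :=
          MulAction.orbitRel_apply.mp (Quotient.exact (OnePoint.coe_injective h))
        exact Quotient.sound (MulAction.orbitRel_apply.mpr ⟨g, rfl⟩)
  · intro z
    cases z with
    | infty => exact ⟨Quotient.mk _ OnePoint.infty, rfl⟩
    | coe y =>
      induction y using Quotient.inductionOn with | _ a
      exact ⟨Quotient.mk _ (a : OnePoint A), rfl⟩

theorem continuous_onePointOrbitMap (G : Type*) [Group G] [Finite G]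
    (A : Type*) [TopologicalSpace A] [MulAction G A] [ContinuousConstSMul G A] :
    Continuous (onePointOrbitMap G A) := by
  refine Continuous.quotient_lift (OnePoint.continuous_map continuous_quotient_mk' ?_) _
  rw [(Filter.hasBasis_coclosedCompact).tendsto_iff Filter.hasBasis_coclosedCompact]
  rintro K ⟨hK, hKc⟩
  exact ⟨_, ⟨hK.preimage continuous_quotient_mk', (isProperMap_orbitMk G A).isCompact_preimage hKc⟩,
    fun _ h => h⟩

/-- for a finite group G acting continuously (by homeomorphisms) on a locally
compact Hausdorff space A, the one-point compactification of the orbit space A/G is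
homeomorphic to the orbit space of the extended action on OnePoint A. -/
theorem onePoint_orbit_space_homeo
    (G : Type*) [Group G] [Finite G]
    (A : Type*) [TopologicalSpace A] [LocallyCompactSpace A] [T2Space A]
    [MulAction G A] [ContinuousConstSMul G A] :
    ∃ h : OnePoint (Quotient (MulAction.orbitRel G A)) ≃ₜ
          Quotient (MulAction.orbitRel G (OnePoint A)),
      (∀ a : A,
          h ((Quotient.mk (MulAction.orbitRel G A) a : Quotient (MulAction.orbitRel G A)) :
              OnePoint (Quotient (MulAction.orbitRel G A)))
            = Quotient.mk (MulAction.orbitRel G (OnePoint A)) (a : OnePoint A)) ∧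
      h OnePoint.infty
        = Quotient.mk (MulAction.orbitRel G (OnePoint A)) OnePoint.infty := by
  have : LocallyCompactSpace (Quotient (MulAction.orbitRel G A)) :=
    MulAction.isOpenQuotientMap_quotientMk.locallyCompactSpace
  let e := (continuous_onePointOrbitMap G A).homeoOfEquivCompactToT2
    (f := Equiv.ofBijective _ (onePointOrbitMap_bijective G A))
  exact ⟨e.symm, fun a => e.symm_apply_eq.mpr rfl, e.symm_apply_eq.mpr rfl⟩
end

section
/- Let G be a finite group and k a field in which the cardinality of G is invertible (i.e., (Fintype.card G : k) ≠ 0). Let (V, ρ) be a finite-dimensional representation of G over k, with ρ̂ : MonoidAlgebra k G →ₐ[k] Module.End k V the induced algebra homomorphism, and regard V as a MonoidAlgebra k G-module via ρ̂. Let R = MonoidAlgebra k G, fix N, M ∈ ℕ, a matrix A : Fin N → Fin M → R, the R-linear map ∂ : (Fin N → R) →ₗ[R] (Fin M → R) given by ∂(v) = fun j => ∑ i, (v i) * (A i j), and the k-linear map T_A : (Fin M → V) →ₗ[k] (Fin N → V) given by (T_A w) i = ∑ j, ρ̂(A i j)(w j). Then: (i) dim_k Hom_R((Fin M → R) ⧸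 LinearMap.range ∂, V) = dim_k (LinearMap.ker T_A); and (ii) dim_k Hom_R(LinearMap.ker ∂, V) = dim_k ((Fin N → V) ⧸ LinearMap.range T_A). -/
/-! The functor `Hom_R(-, V)` turns `∂ : R^N → R^M` into `T_A : V^M → V^N` once `Hom_R(R^n, V)` is
identified with `V^n` by evaluation at the standard basis (`homFreeEquiv`,
`homFreeEquiv_comp_matrixBoundary`). Left exactness of `Hom_R(-, V)` identifies `Hom_R(coker ∂, V)`
with `ker T_A`. By Maschke's theorem `R` is semisimple, so `R`-linear maps extend along injections;
hence restriction `V^N ≃ Hom_R(R^N, V) → Hom_R(ker ∂, V)` is surjective, and its kernel, the maps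
which factor through `∂`, is exactly `range T_A`. -/

/-- The R-linear map (Fin N → R) → (Fin M → R) given by right multiplication by the
matrix A, i.e. v ↦ (j ↦ ∑ i, v i * A i j). -/
def matrixBoundary (R : Type*) [Ring R] (N M : ℕ) (A : Fin N → Fin M → R) :
    (Fin N → R) →ₗ[R] (Fin M → R) where
  toFun v := fun j => ∑ i, v i * A i j
  map_add' v w := by
    funext j
    simp [add_mul, Finset.sum_add_distrib]
  map_smul' c v := by
    funext j
    simp [Finset.mul_sum, mul_assoc, smul_eq_mul]

noncomputable instance asModuleSMulCommClass {k G V : Type*} [CommSemiring k] [Monoid G]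
    [AddCommMonoid V] [Module k V] (ρ : Representation k G V) :
    SMulCommClass (MonoidAlgebra k G) k ρ.asModule where
  smul_comm r c v := by
    apply ρ.asModuleEquiv.injective
    calc ρ.asModuleEquiv (r • c • v)
        = ρ.asAlgebraHom r (ρ.asModuleEquiv (c • v)) := ρ.asModuleEquiv_map_smul r (c • v)
      _ = ρ.asAlgebraHom r (c • ρ.asModuleEquiv v) := rfl
      _ = c • ρ.asAlgebraHom r (ρ.asModuleEquiv v) := map_smul _ c _
      _ = c • ρ.asModuleEquiv (r • v) := by rw [ρ.asModuleEquiv_map_smul r v]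
      _ = ρ.asModuleEquiv (c • r • v) := rfl

/-- The 'entrywise ρ' operator T_A : (Fin M → V) →ₗ[k] (Fin N → V),
(T_A w) i = ∑ j, ρ̂(A i j)(w j). -/
noncomputable def entrywiseRho {k G V : Type*} [CommSemiring k] [Monoid G]
    [AddCommMonoid V] [Module k V] (ρ : Representation k G V)
    (N M : ℕ) (A : Fin N → Fin M → MonoidAlgebra k G) :
    (Fin M → V) →ₗ[k] (Fin N → V) where
  toFun w := fun i => ∑ j, ρ.asAlgebraHom (A i j) (w j)
  map_add' w w' := by
    funext i
    simp [Finset.sum_add_distrib]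
  map_smul' c w := by
    funext i
    simp [Finset.smul_sum]

/-- Evaluation at the standard basis, `Hom_R(R^n, V) ≃ V^n` for `R = k[G]`. -/
noncomputable def homFreeEquiv {k G V : Type*} [Field k] [Group G]
    [AddCommGroup V] [Module k V] (ρ : Representation k G V) (n : ℕ) :
    ((Fin n → MonoidAlgebra k G) →ₗ[MonoidAlgebra k G] ρ.asModule) ≃ₗ[k] (Fin n → V) :=
  (LinearEquiv.piRing (MonoidAlgebra k G) ρ.asModule (Fin n) k).trans
    (LinearEquiv.piCongrRight fun _ => ρ.asModuleEquiv)

theorem homFreeEquiv_apply {k G V : Type*} [Field k] [Group G]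
    [AddCommGroup V] [Module k V] (ρ : Representation k G V) (n : ℕ)
    (f : (Fin n → MonoidAlgebra k G) →ₗ[MonoidAlgebra k G] ρ.asModule) (i : Fin n) :
    homFreeEquiv ρ n f i = ρ.asModuleEquiv (f (Pi.single i 1)) := rfl

/-- Precomposition with `∂` corresponds to `T_A`. -/
theorem homFreeEquiv_comp_matrixBoundary {k G V : Type*} [Field k] [Group G]
    [AddCommGroup V] [Module k V] (ρ : Representation k G V) (N M : ℕ)
    (A : Fin N → Fin M → MonoidAlgebra k G)
    (f : (Fin M → MonoidAlgebra k G) →ₗ[MonoidAlgebra k G] ρ.asModule) :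
    homFreeEquiv ρ N (f ∘ₗ matrixBoundary (MonoidAlgebra k G) N M A) =
      entrywiseRho ρ N M A (homFreeEquiv ρ M f) := by
  funext i
  have h : matrixBoundary (MonoidAlgebra k G) N M A (Pi.single i 1) = A i := by
    funext j
    simp [matrixBoundary, Pi.single_apply]
  have h2 : A i = ∑ j, A i j • (Pi.single j 1 : Fin M → MonoidAlgebra k G) :=
    pi_eq_sum_univ' (A i)
  rw [homFreeEquiv_apply, LinearMap.comp_apply, h]
  conv_lhs => rw [h2]
  simp only [map_sum, map_smul, Representation.asModuleEquiv_map_smul]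
  rfl

/-- for a finite group G with order invertible in the field k, a
finite-dimensional representation (V, ρ), and the 2-step complex of free modules over
R = MonoidAlgebra k G given by the matrix A, the k-dimensions of the R-Hom spaces out of
the cokernel and the kernel of ∂ equal the k-dimensions of the kernel and the cokernel of
the 'entrywise ρ' operator T_A, respectively. -/
theorem hom_dimensions_equal_multiplicity_space_dimensions
    (G : Type*) [Group G] [Fintype G] (k : Type*) [Field k]
    (hcard : (Fintype.card G : k) ≠ 0)
    (V : Type*) [AddCommGroup V] [Module k V] [FiniteDimensional k V]
    (ρ : Representation k G V)
    (N M : ℕ) (A : Fin N → Fin M → MonoidAlgebra k G) :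
    (Module.finrank k
        (((Fin M → MonoidAlgebra k G) ⧸
            LinearMap.range (matrixBoundary (MonoidAlgebra k G) N M A))
          →ₗ[MonoidAlgebra k G] ρ.asModule)
      = Module.finrank k (LinearMap.ker (entrywiseRho ρ N M A))) ∧
    (Module.finrank k
        ((LinearMap.ker (matrixBoundary (MonoidAlgebra k G) N M A))
          →ₗ[MonoidAlgebra k G] ρ.asModule)
      = Module.finrank k ((Fin N → V) ⧸ LinearMap.range (entrywiseRho ρ N M A))) := by
  have : NeZero (Nat.card G : k) := ⟨by rwa [Nat.card_eq_fintype_card]⟩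
  set d := matrixBoundary (MonoidAlgebra k G) N M A with hd
  constructor
  · let Φ : (((Fin M → MonoidAlgebra k G) ⧸ LinearMap.range d) →ₗ[MonoidAlgebra k G] ρ.asModule)
        →ₗ[k] (Fin M → V) :=
      (homFreeEquiv ρ M).toLinearMap ∘ₗ
        { toFun := fun f => f ∘ₗ (LinearMap.range d).mkQ
          map_add' := fun _ _ => rfl
          map_smul' := fun _ _ => rfl }
    have hΦ : ∀ f, Φ f = homFreeEquiv ρ M (f ∘ₗ (LinearMap.range d).mkQ) := fun _ => rfl
    have hinj : Function.Injective Φ := by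
      intro f g hfg
      rw [hΦ, hΦ] at hfg
      exact Submodule.linearMap_qext _ ((homFreeEquiv ρ M).injective hfg)
    have hrange : LinearMap.range Φ = LinearMap.ker (entrywiseRho ρ N M A) := by
      ext w
      rw [LinearMap.mem_range, LinearMap.mem_ker]
      constructor
      · rintro ⟨f, rfl⟩
        rw [hΦ, ← homFreeEquiv_comp_matrixBoundary, ← hd, LinearMap.comp_assoc,
          LinearMap.range_mkQ_comp, LinearMap.comp_zero, map_zero]
      · intro hw
        obtain ⟨f, rfl⟩ := (homFreeEquiv ρ M).surjective w
        rw [← homFreeEquiv_comp_matrixBoundary, ← hd, LinearEquiv.map_eq_zero_iff] at hw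
        refine ⟨(LinearMap.range d).liftQ f (LinearMap.range_le_ker_iff.2 hw), ?_⟩
        rw [hΦ, Submodule.liftQ_mkQ]
    rw [← hrange, LinearMap.finrank_range_of_inj hinj]
  · let Ψ : (Fin N → V) →ₗ[k] (LinearMap.ker d →ₗ[MonoidAlgebra k G] ρ.asModule) :=
      { toFun := fun f : (Fin N → MonoidAlgebra k G) →ₗ[MonoidAlgebra k G] ρ.asModule =>
          f ∘ₗ (LinearMap.ker d).subtype
        map_add' := fun _ _ => rfl
        map_smul' := fun _ _ => rfl } ∘ₗ (homFreeEquiv ρ N).symm.toLinearMap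
    have hΨ : ∀ f, Ψ (homFreeEquiv ρ N f) = f ∘ₗ (LinearMap.ker d).subtype := by
      intro f
      simp [Ψ]
    have hsurj : Function.Surjective Ψ := by
      intro g
      obtain ⟨f, hf⟩ := IsSemisimpleModule.extension_property _
        (LinearMap.ker d).injective_subtype g
      exact ⟨homFreeEquiv ρ N f, (hΨ f).trans hf⟩
    have hker : LinearMap.ker Ψ = LinearMap.range (entrywiseRho ρ N M A) := by
      ext w
      rw [LinearMap.mem_range, LinearMap.mem_ker]
      constructor
      · intro hw
        obtain ⟨f, rfl⟩ := (homFreeEquiv ρ N).surjective w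
        rw [hΨ] at hw
        -- `f` kills `ker ∂`, so it descends to `R^N / ker ∂`, which embeds in `R^M` through `∂`.
        have hle : LinearMap.ker d ≤ LinearMap.ker f := fun x hx =>
          LinearMap.congr_fun hw ⟨x, hx⟩
        have hdinj : Function.Injective ((LinearMap.ker d).liftQ d le_rfl) :=
          LinearMap.ker_eq_bot.1 (Submodule.ker_liftQ_eq_bot _ _ _ le_rfl)
        obtain ⟨g, hg⟩ := IsSemisimpleModule.extension_property _ hdinj
          ((LinearMap.ker d).liftQ f hle)
        refine ⟨homFreeEquiv ρ M g, ?_⟩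
        rw [← homFreeEquiv_comp_matrixBoundary, ← hd]
        congr 1
        refine LinearMap.ext fun x => ?_
        exact LinearMap.congr_fun hg (Submodule.Quotient.mk x)
      · rintro ⟨v, rfl⟩
        obtain ⟨g, rfl⟩ := (homFreeEquiv ρ M).surjective v
        rw [← homFreeEquiv_comp_matrixBoundary, ← hd, hΨ, LinearMap.comp_assoc,
          LinearMap.comp_ker_subtype, LinearMap.comp_zero]
    rw [← hker]
    exact (Ψ.quotKerEquivOfSurjective hsurj).finrank_eq.symm
end
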